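/- arXiv:1803.01338 — 2 statements merged into one kernel-verified Lean document; each statement's English description precedes it below -/
import Mathlib

section
/- Let (r,c) be a graphical bipartite degree sequence on parts of sizes m and n, and let δ_r, Δ_r be the minimum and maximum entries of r and δ_c, Δ_c the minimum and maximum entries of c. If (Δ_r − δ_c)² ≤ 4δ_c(n − Δ_r) and (Δ_c − δ_r)² ≤ 4δ_r(m − Δ_c), then k_JS(r,c) ≤ 8; that is, every graph in G'(r,c) can be transformed into an element of G(r,c) by at most 8 JS-adjacent steps within G'(r,c). -/
/-!
Let `B` miss one unit of degree at `x ∈ V` and at `y ∈ U`.  Orient the non-edges of `B` from `V` to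
`U` and the edges from `U` to `V`.  A shortest directed walk from `x` to `y` with `k + 1` non-edges
yields `k` moves of Type 1 followed by one of Type 2 (`dist_of_altWalk`): minimality guarantees that
a move does not disturb the rest of the walk (`altWalk_step`).

Suppose that no walk with at most six non-edges exists.  Sorting vertices by their distance to `y`
gives increasing sets `S 0 ⊆ ⋯ ⊆ S 5` in `V` and `T 1 ⊆ ⋯ ⊆ T 5` in `U`, with `x ∈ S k` and
`y ∉ T k`, such that all edges at `T k` end in `S k` and all non-edges at `S k` end in `T (k+1)`.
Double counting (`cut_identity`) compares the degree sums over `S` and `T` with `|S| * |Tᶜ|`, up to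
the number of arcs leaving the cut `(S, T)`.  With `s k = |S k|` and `p k = |(T k)ᶜ|`, along the
staircase `(s 1, p 1), (s 1, p 2), (s 2, p 2), …` this number is at most the product of the two
neighbouring increments, so each point `(s, p)` satisfies, with error term `e` this product,
`δc * (n - Δr) < (s - δc) * (Δr - p) + e` and `δr * (m - Δc) < (p - δr) * (Δc - s) + e`.
By AM-GM and the hypotheses, five consecutive points with `s ≤ p` contradict the first family and
five consecutive points with `p ≤ s` contradict the second (`no_five_points`).  Among nine
consecutive points, one of the two happens, since `p - s` is nonincreasing.  Hence six steps
always suffice.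
-/

/-- A bipartite graph on parts `{1,…,m}` and `{1,…,n}`, given by its set of
edges (each edge has one endpoint in each part). -/
abbrev BipGraph (m n : ℕ) := Finset (Fin m × Fin n)

/-- Degree of vertex `i ∈ V` (the part of size `m`). -/
def degV {m n : ℕ} (B : BipGraph m n) (i : Fin m) : ℕ :=
  (B.filter (fun e => e.1 = i)).card

/-- Degree of vertex `j ∈ U` (the part of size `n`). -/
def degU {m n : ℕ} (B : BipGraph m n) (j : Fin n) : ℕ :=
  (B.filter (fun e => e.2 = j)).card

/-- `B ∈ 𝒢(r,c)`: the vertices of `V` have degrees `r` and the vertices of `U`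
have degrees `c`. -/
def memB {m n : ℕ} (r : Fin m → ℕ) (c : Fin n → ℕ) (B : BipGraph m n) : Prop :=
  (∀ i, degV B i = r i) ∧ (∀ j, degU B j = c j)

/-- `B ∈ 𝒢'(r,c)`: either `B ∈ 𝒢(r,c)`, or there are `x ∈ V` and `y ∈ U` such
that `x` has degree `r x − 1`, `y` has degree `c y − 1`, and all other degrees
agree with `(r,c)`. -/
def memB' {m n : ℕ} (r : Fin m → ℕ) (c : Fin n → ℕ) (B : BipGraph m n) : Prop :=
  memB r c B ∨
    ∃ (x : Fin m) (y : Fin n), degV B x + 1 = r x ∧ degU B y + 1 = c y ∧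
      (∀ i, i ≠ x → degV B i = r i) ∧ (∀ j, j ≠ y → degU B j = c j)

/-- A single (directed) move of the bipartite Jerrum–Sinclair chain. -/
def bjsStep {m n : ℕ} (r : Fin m → ℕ) (c : Fin n → ℕ) (B B' : BipGraph m n) : Prop :=
  (memB r c B ∧ ∃ e ∈ B, B' = B.erase e) ∨
  (¬ memB r c B ∧ ∃ (i : Fin m) (j : Fin n), (i, j) ∉ B ∧
      degV B i < r i ∧ degU B j < c j ∧ B' = insert (i, j) B) ∨
  (¬ memB r c B ∧ ∃ (i : Fin m) (j : Fin n) (k : Fin m), (i, j) ∉ B ∧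
      degV B i < r i ∧ degU B j = c j ∧ (k, j) ∈ B ∧
      B' = (insert (i, j) B).erase (k, j))

/-- `B` and `B'` are JS adjacent. -/
def bjsAdj {m n : ℕ} (r : Fin m → ℕ) (c : Fin n → ℕ) (B B' : BipGraph m n) : Prop :=
  bjsStep r c B B' ∨ bjsStep r c B' B

/-- There is a walk of exactly `t` JS-adjacent steps from `B` to `B'`, all of
whose states lie in `𝒢'(r,c)`. -/
def bjsChain {m n : ℕ} (r : Fin m → ℕ) (c : Fin n → ℕ) (t : ℕ) (B B' : BipGraph m n) : Prop :=
  ∃ f : ℕ → BipGraph m n, f 0 = B ∧ f t = B' ∧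
    (∀ i ≤ t, memB' r c (f i)) ∧ (∀ i < t, bjsAdj r c (f i) (f (i+1)))

/-- The JS distance between `B` and `B'` (within `𝒢'(r,c)`) is at most `k`. -/
def bjsDistLe {m n : ℕ} (r : Fin m → ℕ) (c : Fin n → ℕ) (k : ℕ) (B B' : BipGraph m n) : Prop :=
  ∃ t ≤ k, bjsChain r c t B B'

section auxiliary

open Finset

/-! ### Alternating walks and moves -/

/-- `altWalk B y k i`: there is a walk from `i ∈ V` to `y ∈ U` that alternates between non-edges
and edges of `B`, starts and ends with a non-edge, and contains exactly `k` edges (hence `k + 1`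
non-edges). Vertices may be repeated. -/
def altWalk {m n : ℕ} (B : BipGraph m n) (y : Fin n) : ℕ → Fin m → Prop
  | 0, i => (i, y) ∉ B
  | k + 1, i => ∃ j v, (i, j) ∉ B ∧ (v, j) ∈ B ∧ altWalk B y k v

/-- `B` has the degrees prescribed by `(r, c)`, except that `x ∈ V` and `y ∈ U` both have degree one
less. -/
def deficient {m n : ℕ} (r : Fin m → ℕ) (c : Fin n → ℕ) (B : BipGraph m n) (x : Fin m)
    (y : Fin n) : Prop :=
  degV B x + 1 = r x ∧ degU B y + 1 = c y ∧
    (∀ i, i ≠ x → degV B i = r i) ∧ (∀ j, j ≠ y → degU B j = c j)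

section walks

variable {m n : ℕ} {r : Fin m → ℕ} {c : Fin n → ℕ} {B : BipGraph m n} {x : Fin m} {y : Fin n}

theorem degV_insert {i : Fin m} {j : Fin n} (h : (i, j) ∉ B) (v : Fin m) :
    degV (insert (i, j) B) v = degV B v + if v = i then 1 else 0 := by
  unfold degV
  rw [filter_insert]
  split_ifs with h1 h2 h2
  · rw [card_insert_of_notMem (by simp [h])]
  · exact absurd h1.symm h2
  · exact absurd h2.symm h1
  · rfl

theorem degU_insert {i : Fin m} {j : Fin n} (h : (i, j) ∉ B) (v : Fin n) :
    degU (insert (i, j) B) v = degU B v + if v = j then 1 else 0 := by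
  unfold degU
  rw [filter_insert]
  split_ifs with h1 h2 h2
  · rw [card_insert_of_notMem (by simp [h])]
  · exact absurd h1.symm h2
  · exact absurd h2.symm h1
  · rfl

theorem degV_erase {i : Fin m} {j : Fin n} (h : (i, j) ∈ B) (v : Fin m) :
    degV (B.erase (i, j)) v + (if v = i then 1 else 0) = degV B v := by
  rw [← degV_insert (notMem_erase _ _), insert_erase h]

theorem degU_erase {i : Fin m} {j : Fin n} (h : (i, j) ∈ B) (v : Fin n) :
    degU (B.erase (i, j)) v + (if v = j then 1 else 0) = degU B v := by
  rw [← degU_insert (notMem_erase _ _), insert_erase h]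

theorem deficient.not_memB (h : deficient r c B x y) : ¬ memB r c B := by
  intro h'
  have := h'.1 x
  have := h.1
  omega

/-- A move of Type 1 transfers the deficiency in `V` from `x` to `v`. -/
theorem deficient.move (h : deficient r c B x y) {j : Fin n} {v : Fin m} (hj : (x, j) ∉ B)
    (hv : (v, j) ∈ B) : deficient r c ((insert (x, j) B).erase (v, j)) v y := by
  have hv' : (v, j) ∈ insert (x, j) B := mem_insert_of_mem hv
  have hvx : v ≠ x := by rintro rfl; exact hj hv
  obtain ⟨h1, h2, h3, h4⟩ := h
  have eV := fun i => degV_erase hv' i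
  have eU := fun i => degU_erase hv' i
  simp only [degV_insert hj] at eV
  simp only [degU_insert hj] at eU
  refine ⟨?_, ?_, fun i hi => ?_, fun i hi => ?_⟩
  · have := eV v
    have := h3 v hvx
    simp_all
  · have := eU y
    omega
  · have := eV i
    by_cases hix : i = x
    · subst hix
      simp_all
    · have := h3 i hix
      simp_all
  · have := eU i
    have := h4 i hi
    omega

/-- Adding the missing edge between the two deficient vertices. -/
theorem deficient.complete (h : deficient r c B x y) (hxy : (x, y) ∉ B) :
    memB r c (insert (x, y) B) := by
  obtain ⟨h1, h2, h3, h4⟩ := h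
  refine ⟨fun i => ?_, fun i => ?_⟩
  · rw [degV_insert hxy]
    split_ifs with hi
    · rw [hi, h1]
    · exact h3 i hi
  · rw [degU_insert hxy]
    split_ifs with hi
    · rw [hi, h2]
    · exact h4 i hi

theorem bjsDistLe_cons {B₁ B' : BipGraph m n} {k : ℕ} (h0 : memB' r c B) (h1 : bjsAdj r c B B₁)
    (h2 : bjsDistLe r c k B₁ B') : bjsDistLe r c (k + 1) B B' := by
  obtain ⟨t, ht, f, f0, ft, hf, hf'⟩ := h2
  refine ⟨t + 1, by omega, fun i => Nat.casesOn i B f, rfl, ft, ?_, ?_⟩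
  · rintro (_ | i) hi
    · exact h0
    · exact hf i (by omega)
  · rintro (_ | i) hi
    · show bjsAdj r c B (f 0)
      rw [f0]
      exact h1
    · exact hf' i (by omega)

theorem bjsDistLe_mono {B' : BipGraph m n} {k l : ℕ} (hkl : k ≤ l) (h : bjsDistLe r c k B B') :
    bjsDistLe r c l B B' := by
  obtain ⟨t, ht, h⟩ := h
  exact ⟨t, ht.trans hkl, h⟩

theorem bjsDistLe_refl (h : memB' r c B) : bjsDistLe r c 0 B B :=
  ⟨0, le_rfl, fun _ => B, rfl, rfl, fun _ _ => h, fun i hi => absurd hi (by omega)⟩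

/-- If no walk with at most `k` edges starts at `x`, then a move at `x` leaves all walks with at most
`k` edges intact. -/
theorem altWalk_step {k : ℕ} {j : Fin n} {v : Fin m} (hj : (x, j) ∉ B)
    (hmin : ∀ l ≤ k, ¬ altWalk B y l x) :
    ∀ l ≤ k, ∀ u, altWalk B y l u → altWalk ((insert (x, j) B).erase (v, j)) y l u := by
  intro l
  induction l with
  | zero =>
    intro hl u hu
    have hux : u ≠ x := by rintro rfl; exact hmin 0 hl hu
    simp only [altWalk] at hu ⊢
    simp [hu, hux]
  | succ l ih =>
    intro hl u hu
    have hux : u ≠ x := by rintro rfl; exact hmin _ hl hu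
    obtain ⟨j', v', h1, h2, h3⟩ := hu
    refine ⟨j', v', by simp [h1, hux], ?_, ih (by omega) v' h3⟩
    -- Reusing the edge `(v, j)` would give a shortcut from `x`, straight through `j`.
    have hne : (v', j') ≠ (v, j) := by
      intro h
      obtain ⟨rfl, rfl⟩ := Prod.mk.inj h
      exact hmin (l + 1) hl ⟨j', v', hj, h2, h3⟩
    exact mem_erase.2 ⟨hne, mem_insert_of_mem h2⟩

/-- An alternating walk with `k` edges from the deficient `x` to the deficient `y` bounds the JS
distance to a realization by `k + 1`. -/
theorem dist_of_altWalk (k : ℕ) : ∀ (B : BipGraph m n) (x : Fin m), deficient r c B x y →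
    altWalk B y k x → ∃ B', memB r c B' ∧ bjsDistLe r c (k + 1) B B' := by
  induction k using Nat.strong_induction_on with
  | _ k ih =>
    intro B x hd hw
    by_cases hmin : ∃ l < k, altWalk B y l x
    · obtain ⟨l, hl, hw'⟩ := hmin
      obtain ⟨B', h1, h2⟩ := ih l hl B x hd hw'
      exact ⟨B', h1, bjsDistLe_mono (by omega) h2⟩
    · push Not at hmin
      have hB : memB' r c B := Or.inr ⟨x, y, hd⟩
      have hdx := hd.1
      have hdy := hd.2.1
      cases k with
      | zero =>
        have hc := hd.complete hw
        refine ⟨_, hc, bjsDistLe_cons hB (Or.inl (Or.inr (Or.inl ⟨hd.not_memB, x, y, hw, ?_, ?_,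
          rfl⟩))) (bjsDistLe_refl (Or.inl hc))⟩ <;> omega
      | succ k =>
        obtain ⟨j, v, hj, hv, hw'⟩ := hw
        have hjy : j ≠ y := by rintro rfl; exact hmin 0 (by omega) hj
        have hmin' : ∀ l ≤ k, ¬ altWalk B y l x := fun l hl => hmin l (by omega)
        obtain ⟨B', h1, h2⟩ := ih k (by omega) _ v (hd.move hj hv)
          (altWalk_step hj hmin' k le_rfl v hw')
        exact ⟨B', h1, bjsDistLe_cons hB (Or.inl (Or.inr (Or.inr ⟨hd.not_memB, x, j, v, hj,
          by omega, hd.2.2.2 j hjy, hv, rfl⟩))) h2⟩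

end walks

/-! ### Double counting across a cut -/

section counting

variable {m n : ℕ} {r : Fin m → ℕ} {c : Fin n → ℕ} {B : BipGraph m n} {x : Fin m} {y : Fin n}

theorem degV_eq_sum (B : BipGraph m n) (i : Fin m) :
    degV B i = ∑ j, if (i, j) ∈ B then 1 else 0 := by
  rw [degV, ← card_filter]
  refine card_bij (fun e _ => e.2) ?_ ?_ ?_
  · rintro ⟨a, b⟩ h
    simp only [mem_filter, mem_univ, true_and] at h ⊢
    rw [← h.2]
    exact h.1
  · rintro ⟨a, b⟩ h ⟨a', b'⟩ h' e
    simp only [mem_filter] at h h' e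
    rw [h.2, h'.2, e]
  · intro b hb
    exact ⟨(i, b), by simpa using hb, rfl⟩

theorem degU_eq_sum (B : BipGraph m n) (j : Fin n) :
    degU B j = ∑ i, if (i, j) ∈ B then 1 else 0 := by
  rw [degU, ← card_filter]
  refine card_bij (fun e _ => e.1) ?_ ?_ ?_
  · rintro ⟨a, b⟩ h
    simp only [mem_filter, mem_univ, true_and] at h ⊢
    rw [← h.2]
    exact h.1
  · rintro ⟨a, b⟩ h ⟨a', b'⟩ h' e
    simp only [mem_filter] at h h' e
    rw [h.2, h'.2, e]
  · intro b hb
    exact ⟨(b, j), by simpa using hb, rfl⟩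

/-- The arcs leaving `S ∪ T`, when non-edges of `B` are oriented from `V` to `U` and edges from `U`
to `V`. -/
def cutArcs (B : BipGraph m n) (S : Finset (Fin m)) (T : Finset (Fin n)) :
    Finset (Fin m × Fin n) :=
  univ.filter fun e => (e.1 ∈ S ∧ e.2 ∉ T ∧ e ∉ B) ∨ (e.1 ∉ S ∧ e.2 ∈ T ∧ e ∈ B)

theorem cut_identity (B : BipGraph m n) (S : Finset (Fin m)) (T : Finset (Fin n)) :
    ∑ j ∈ T, degU B j + #S * #Tᶜ = ∑ i ∈ S, degV B i + #(cutArcs B S T) := by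
  have e1 : ∑ j ∈ T, degU B j
      = ∑ e : Fin m × Fin n, if e.2 ∈ T ∧ e ∈ B then 1 else 0 := by
    rw [Fintype.sum_prod_type_right, ← sum_filter_add_sum_filter_not univ (· ∈ T)]
    simp only [degU_eq_sum]
    rw [sum_eq_zero (s := univ.filter (· ∉ T))]
    · rw [filter_mem_eq_inter, univ_inter, add_zero]
      exact sum_congr rfl fun j hj => by simp [hj]
    · intro j hj
      simp only [mem_filter, mem_univ, true_and] at hj
      simp [hj]
  have e2 : ∑ i ∈ S, degV B i
      = ∑ e : Fin m × Fin n, if e.1 ∈ S ∧ e ∈ B then 1 else 0 := by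
    rw [Fintype.sum_prod_type, ← sum_filter_add_sum_filter_not univ (· ∈ S)]
    simp only [degV_eq_sum]
    rw [sum_eq_zero (s := univ.filter (· ∉ S))]
    · rw [filter_mem_eq_inter, univ_inter, add_zero]
      exact sum_congr rfl fun j hj => by simp [hj]
    · intro j hj
      simp only [mem_filter, mem_univ, true_and] at hj
      simp [hj]
  have e3 : #S * #Tᶜ = ∑ e : Fin m × Fin n, if e.1 ∈ S ∧ e.2 ∉ T then 1 else 0 := by
    rw [← card_product, ← card_filter]
    congr 1
    ext e
    simp
  rw [e1, e2, e3, cutArcs, card_filter, ← sum_add_distrib, ← sum_add_distrib]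
  refine sum_congr rfl fun e _ => ?_
  by_cases h1 : e.1 ∈ S <;> by_cases h2 : e.2 ∈ T <;> by_cases h3 : e ∈ B <;> simp [h1, h2, h3]

theorem sum_degV_compl (B : BipGraph m n) (S : Finset (Fin m)) (T : Finset (Fin n)) :
    ∑ i ∈ Sᶜ, degV B i + #S * #Tᶜ = ∑ j ∈ Tᶜ, degU B j + #(cutArcs B S T) := by
  have h1 := cut_identity B S T
  have h2 := cut_identity B univ univ
  have h3 := sum_add_sum_compl S (degV B)
  have h4 := sum_add_sum_compl T (degU B)
  have h5 : cutArcs B univ univ = ∅ := by simp [cutArcs]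
  simp [h5] at h2
  omega

theorem deficient.sum_degV_lt (h : deficient r c B x y) {Δ : ℕ} (hΔ : ∀ i, r i ≤ Δ)
    {S : Finset (Fin m)} (hx : x ∈ S) : ∑ i ∈ S, degV B i < #S * Δ := by
  rw [← smul_eq_mul, ← sum_const]
  refine sum_lt_sum (fun i _ => ?_) ⟨x, hx, ?_⟩
  · by_cases hi : i = x
    · have := h.1
      have := hΔ x
      subst hi
      omega
    · rw [h.2.2.1 i hi]
      exact hΔ i
  · have := h.1
    have := hΔ x
    omega

theorem deficient.sum_degU_lt (h : deficient r c B x y) {Δ : ℕ} (hΔ : ∀ i, c i ≤ Δ)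
    {T : Finset (Fin n)} (hy : y ∈ T) : ∑ i ∈ T, degU B i < #T * Δ := by
  rw [← smul_eq_mul, ← sum_const]
  refine sum_lt_sum (fun i _ => ?_) ⟨y, hy, ?_⟩
  · by_cases hi : i = y
    · have := h.2.1
      have := hΔ y
      subst hi
      omega
    · rw [h.2.2.2 i hi]
      exact hΔ i
  · have := h.2.1
    have := hΔ y
    omega

theorem deficient.le_sum_degV (h : deficient r c B x y) {δ : ℕ} (hδ : ∀ i, δ ≤ r i)
    {S : Finset (Fin m)} (hx : x ∉ S) : #S * δ ≤ ∑ i ∈ S, degV B i := by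
  rw [← smul_eq_mul, ← sum_const]
  refine sum_le_sum fun i hi => ?_
  rw [h.2.2.1 i (by rintro rfl; exact hx hi)]
  exact hδ i

theorem deficient.le_sum_degU (h : deficient r c B x y) {δ : ℕ} (hδ : ∀ i, δ ≤ c i)
    {T : Finset (Fin n)} (hy : y ∉ T) : #T * δ ≤ ∑ i ∈ T, degU B i := by
  rw [← smul_eq_mul, ← sum_const]
  refine sum_le_sum fun i hi => ?_
  rw [h.2.2.2 i (by rintro rfl; exact hy hi)]
  exact hδ i

/-- Bounding the sums in `cut_identity` by extreme degrees; this is the inequality that matters where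
`|S| ≤ |Tᶜ|`. -/
theorem deficient.cut_ineq₁ (h : deficient r c B x y) {δ Δ : ℕ} (hδ : ∀ j, δ ≤ c j)
    (hΔ : ∀ i, r i ≤ Δ) {S : Finset (Fin m)} {T : Finset (Fin n)} (hx : x ∈ S) (hy : y ∉ T) {e : ℤ}
    (he : (#(cutArcs B S T) : ℤ) ≤ e) :
    (δ : ℤ) * (n - Δ) < (#S - δ) * (Δ - #Tᶜ) + e := by
  have h1 := cut_identity B S T
  have h2 := h.sum_degV_lt hΔ hx
  have h3 := h.le_sum_degU hδ hy
  have h4 := card_add_card_compl T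
  rw [Fintype.card_fin] at h4
  zify at h1 h2 h3 h4
  rw [← h4]
  linarith

/-- The counterpart of `deficient.cut_ineq₁` for the complements of `S` and `T`; it matters where
`|Tᶜ| ≤ |S|`. -/
theorem deficient.cut_ineq₂ (h : deficient r c B x y) {δ Δ : ℕ} (hδ : ∀ j, δ ≤ r j)
    (hΔ : ∀ i, c i ≤ Δ) {S : Finset (Fin m)} {T : Finset (Fin n)} (hx : x ∈ S) (hy : y ∉ T) {e : ℤ}
    (he : (#(cutArcs B S T) : ℤ) ≤ e) :
    (δ : ℤ) * (m - Δ) < (#Tᶜ - δ) * (Δ - #S) + e := by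
  have h1 := sum_degV_compl B S T
  have h2 := h.sum_degU_lt hΔ (mem_compl.2 hy)
  have h3 := h.le_sum_degV hδ (S := Sᶜ) (by simpa using hx)
  have h4 := card_add_card_compl S
  rw [Fintype.card_fin] at h4
  zify at h1 h2 h3 h4
  rw [← h4]
  linarith

end counting

/-! ### Numerical inequalities -/

/-- A point with `p - s = w₁` where the cut inequality holds has `3 w₁ < 4 w₀ - 2 D`, where
`D = Δ - δ` and `w₀` is the value of `p - s` at the preceding point: here
`a + b = (s - δ) + (Δ - p) = D - w₁`, so AM-GM bounds the product. -/
theorem point_bound {a b D M w₀ w₁ w₂ : ℤ} (hab : a + b = D - w₁) (hM : D ^ 2 ≤ 4 * M)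
    (h : M < a * b + (w₀ - w₁) * (w₁ - w₂)) (h01 : w₁ ≤ w₀) (h1 : 0 ≤ w₁) (h2 : 0 ≤ w₂) :
    3 * w₁ < 4 * w₀ - 2 * D := by
  have h3 : 4 * (a * b) ≤ (D - w₁) ^ 2 := by
    rw [← hab]
    nlinarith [sq_nonneg (a - b)]
  have h4 : (w₀ - w₁) * w₂ ≥ 0 := mul_nonneg (by linarith) h2
  by_contra hcon
  have h5 : 0 ≤ w₁ * (3 * w₁ - (4 * w₀ - 2 * D)) := mul_nonneg h1 (by linarith)
  nlinarith

/-- Three uses of `point_bound` give `w₁ < 2 D / 3`, `w₂ < 2 D / 9` and `w₃ < 0`. -/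
theorem no_five_points {D M w₀ w₁ w₂ w₃ w₄ a₁ b₁ a₂ b₂ a₃ b₃ : ℤ} (hM : D ^ 2 ≤ 4 * M)
    (h0 : w₀ ≤ D) (h10 : w₁ ≤ w₀) (h21 : w₂ ≤ w₁) (h32 : w₃ ≤ w₂) (h43 : w₄ ≤ w₃) (h4 : 0 ≤ w₄)
    (e1 : a₁ + b₁ = D - w₁) (e2 : a₂ + b₂ = D - w₂) (e3 : a₃ + b₃ = D - w₃)
    (i1 : M < a₁ * b₁ + (w₀ - w₁) * (w₁ - w₂))
    (i2 : M < a₂ * b₂ + (w₁ - w₂) * (w₂ - w₃))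
    (i3 : M < a₃ * b₃ + (w₂ - w₃) * (w₃ - w₄)) : False := by
  have := point_bound e1 hM i1 h10 (by linarith) (by linarith)
  have := point_bound e2 hM i2 h21 (by linarith) (by linarith)
  have := point_bound e3 hM i3 h32 (by linarith) (by linarith)
  linarith

/-! ### Distance levels and existence of a short walk -/

section levels

variable {m n : ℕ} {r : Fin m → ℕ} {c : Fin n → ℕ} {B : BipGraph m n} {x : Fin m} {y : Fin n}

open Classical in
/-- For `k ≤ 5`, the vertices of `V` from which no alternating walk to `y` with at most `5 - k`
edges starts. -/
noncomputable def levelS (B : BipGraph m n) (y : Fin n) (k : ℕ) : Finset (Fin m) :=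
  univ.filter fun v => ∀ l, l + k ≤ 5 → ¬ altWalk B y l v

open Classical in
/-- The vertices of `U` other than `y` all of whose neighbours lie in `levelS B y k`. -/
noncomputable def levelT (B : BipGraph m n) (y : Fin n) (k : ℕ) : Finset (Fin n) :=
  univ.filter fun j => j ≠ y ∧ ∀ v, (v, j) ∈ B → v ∈ levelS B y k

theorem levelS_mono : Monotone (levelS B y) := by
  intro k l hkl v hv
  simp only [levelS, mem_filter, mem_univ, true_and] at hv ⊢
  exact fun a ha => hv a (by omega)

theorem levelT_mono : Monotone (levelT B y) := by
  intro k l hkl j hj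
  simp only [levelT, mem_filter, mem_univ, true_and] at hj ⊢
  exact ⟨hj.1, fun v hv => levelS_mono hkl (hj.2 v hv)⟩

theorem notMem_levelT (k : ℕ) : y ∉ levelT B y k := by simp [levelT]

theorem mem_levelS_of_edge {k : ℕ} {v : Fin m} {j : Fin n} (hj : j ∈ levelT B y k)
    (h : (v, j) ∈ B) : v ∈ levelS B y k := by
  simp only [levelT, mem_filter, mem_univ, true_and] at hj
  exact hj.2 v h

theorem mem_levelT_of_nonedge {k : ℕ} (hk : k ≤ 4) {v : Fin m} {j : Fin n}
    (hv : v ∈ levelS B y k) (h : (v, j) ∉ B) : j ∈ levelT B y (k + 1) := by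
  simp only [levelS, mem_filter, mem_univ, true_and] at hv
  simp only [levelT, mem_filter, mem_univ, true_and]
  constructor
  · rintro rfl
    exact hv 0 (by omega) h
  · simp only [levelS, mem_filter, mem_univ, true_and]
    exact fun u hu l hl hw => hv (l + 1) (by omega) ⟨j, u, h, hu, hw⟩

/-- `#(levelS B y k)`, as an integer. -/
noncomputable def sizeS (B : BipGraph m n) (y : Fin n) (k : ℕ) : ℤ := #(levelS B y k)

/-- The size of the complement of `levelT B y k`, as an integer. -/
noncomputable def sizeT (B : BipGraph m n) (y : Fin n) (k : ℕ) : ℤ := #(levelT B y k)ᶜ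

theorem card_sdiff_levelS (k : ℕ) :
    (#(levelS B y (k + 1) \ levelS B y k) : ℤ) = sizeS B y (k + 1) - sizeS B y k := by
  have h := levelS_mono (B := B) (y := y) (Nat.le_succ k)
  have := card_sdiff_add_card_eq_card h
  simp only [sizeS, Nat.succ_eq_add_one] at *
  omega

theorem card_sdiff_levelT (k : ℕ) :
    (#(levelT B y (k + 1) \ levelT B y k) : ℤ) = sizeT B y k - sizeT B y (k + 1) := by
  have h := levelT_mono (B := B) (y := y) (Nat.le_succ k)
  have := card_sdiff_add_card_eq_card h
  have := card_add_card_compl (levelT B y k)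
  have := card_add_card_compl (levelT B y (k + 1))
  simp only [sizeT, Nat.succ_eq_add_one] at *
  omega

theorem sizeS_mono : Monotone (sizeS B y) := fun _ _ h =>
  Int.ofNat_le.2 <| card_le_card (levelS_mono h)

theorem sizeT_anti : Antitone (sizeT B y) := fun _ _ h =>
  Int.ofNat_le.2 <| card_le_card (compl_subset_compl.2 (levelT_mono h))

/-- Only edges between the new parts of the next two levels leave `(S k, T (k + 1))`. -/
theorem card_cutArcs_lower {k : ℕ} (hk : k ≤ 4) :
    (#(cutArcs B (levelS B y k) (levelT B y (k + 1))) : ℤ)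
      ≤ (sizeT B y k - sizeT B y (k + 1)) * (sizeS B y (k + 1) - sizeS B y k) := by
  rw [← card_sdiff_levelS, ← card_sdiff_levelT, mul_comm]
  norm_cast
  rw [← card_product]
  refine card_le_card ?_
  rintro ⟨v, j⟩ h
  simp only [cutArcs, mem_filter, mem_univ, true_and] at h
  simp only [mem_product, mem_sdiff]
  rcases h with ⟨h1, h2, h3⟩ | ⟨h1, h2, h3⟩
  · exact absurd (mem_levelT_of_nonedge hk h1 h3) h2
  · exact ⟨⟨mem_levelS_of_edge h2 h3, h1⟩, h2, fun h => h1 (mem_levelS_of_edge h h3)⟩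

/-- Only non-edges between the new parts of two adjacent levels leave `(S (k + 1), T (k + 1))`. -/
theorem card_cutArcs_diag {k : ℕ} (hk : k ≤ 3) :
    (#(cutArcs B (levelS B y (k + 1)) (levelT B y (k + 1))) : ℤ)
      ≤ (sizeS B y (k + 1) - sizeS B y k) * (sizeT B y (k + 1) - sizeT B y (k + 2)) := by
  rw [← card_sdiff_levelS, ← card_sdiff_levelT]
  norm_cast
  rw [← card_product]
  refine card_le_card ?_
  rintro ⟨v, j⟩ h
  simp only [cutArcs, mem_filter, mem_univ, true_and] at h
  simp only [mem_product, mem_sdiff]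
  rcases h with ⟨h1, h2, h3⟩ | ⟨h1, h2, h3⟩
  · exact ⟨⟨h1, fun h => h2 (mem_levelT_of_nonedge (by omega) h h3)⟩,
      mem_levelT_of_nonedge (by omega) h1 h3, h2⟩
  · exact absurd (mem_levelS_of_edge h2 h3) h1

theorem degV_eq_card (B : BipGraph m n) (i : Fin m) :
    degV B i = #(univ.filter fun j => (i, j) ∈ B) := by
  rw [degV_eq_sum, card_filter]

theorem degU_eq_card (B : BipGraph m n) (j : Fin n) :
    degU B j = #(univ.filter fun i => (i, j) ∈ B) := by
  rw [degU_eq_sum, card_filter]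

/-- The deficient vertices are joined by an alternating walk with at most six non-edges. -/
theorem exists_altWalk (hd : deficient r c B x y) {δr Δr δc Δc : ℕ}
    (hδr : ∀ i, δr ≤ r i) (hΔr : ∀ i, r i ≤ Δr) (hδc : ∀ j, δc ≤ c j) (hΔc : ∀ j, c j ≤ Δc)
    (hrn : ∀ i, r i ≤ n) (hcm : ∀ j, c j ≤ m)
    (hineq1 : ((Δr : ℤ) - (δc : ℤ)) ^ 2 ≤ 4 * (δc : ℤ) * ((n : ℤ) - (Δr : ℤ)))
    (hineq2 : ((Δc : ℤ) - (δr : ℤ)) ^ 2 ≤ 4 * (δr : ℤ) * ((m : ℤ) - (Δc : ℤ))) :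
    ∃ l ≤ 5, altWalk B y l x := by
  by_contra! hno
  have hx0 : x ∈ levelS B y 0 := by
    simp only [levelS, mem_filter, mem_univ, true_and]
    exact fun l hl => hno l (by omega)
  have hx : ∀ k, x ∈ levelS B y k := fun k => levelS_mono (Nat.zero_le k) hx0
  have hdx := hd.1
  have hdy := hd.2.1
  -- A vertex of `T 1` has all its neighbours in `S 1`.
  have hs1 : (δc : ℤ) ≤ sizeS B y 1 := by
    obtain ⟨j, hj⟩ : ∃ j, (x, j) ∉ B := by
      by_contra! hall
      have h := degV_eq_card B x
      simp [hall] at h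
      have := hrn x
      omega
    have hjT := mem_levelT_of_nonedge (by omega) hx0 hj
    have hjy : j ≠ y := by rintro rfl; exact notMem_levelT _ hjT
    have h := degU_eq_card B j
    rw [hd.2.2.2 j hjy] at h
    have h' : #(univ.filter fun i => (i, j) ∈ B) ≤ #(levelS B y 1) :=
      card_le_card fun v hv => mem_levelS_of_edge hjT (by simpa using hv)
    have := hδc j
    simp only [sizeS]
    omega
  have hp1 : sizeT B y 1 ≤ Δr := by
    have h : #(levelT B y 1)ᶜ ≤ #(univ.filter fun j => (x, j) ∈ B) := by
      refine card_le_card fun j hj => ?_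
      by_contra hcon
      simp only [mem_filter, mem_univ, true_and] at hcon
      exact (mem_compl.1 hj) (mem_levelT_of_nonedge (by omega) hx0 hcon)
    rw [← degV_eq_card] at h
    have := hΔr x
    simp only [sizeT]
    omega
  have hs5' : #(levelS B y 5) < c y := by
    have h : #(levelS B y 5) ≤ #(univ.filter fun i => (i, y) ∈ B) := by
      refine card_le_card fun v hv => ?_
      simp only [levelS, mem_filter, mem_univ, true_and] at hv ⊢
      exact not_not.1 (hv 0 (by omega))
    rw [← degU_eq_card] at h
    omega
  have hs5 : sizeS B y 5 ≤ Δc := by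
    have := hΔc y
    simp only [sizeS]
    omega
  -- A vertex outside `S 5` has all its neighbours outside `T 5`.
  have hp5 : (δr : ℤ) ≤ sizeT B y 5 := by
    obtain ⟨i, hi⟩ : ∃ i, i ∉ levelS B y 5 := by
      by_contra! hall
      rw [eq_univ_iff_forall.2 hall, card_univ, Fintype.card_fin] at hs5'
      have := hcm y
      omega
    have hix : i ≠ x := by rintro rfl; exact hi (hx 5)
    have h := degV_eq_card B i
    rw [hd.2.2.1 i hix] at h
    have h' : #(univ.filter fun j => (i, j) ∈ B) ≤ #(levelT B y 5)ᶜ := by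
      refine card_le_card fun j hj => mem_compl.2 fun hjT => hi (mem_levelS_of_edge hjT ?_)
      simpa using hj
    have := hδr i
    simp only [sizeT]
    omega
  have s12 := sizeS_mono (B := B) (y := y) (show 1 ≤ 2 by omega)
  have s23 := sizeS_mono (B := B) (y := y) (show 2 ≤ 3 by omega)
  have s34 := sizeS_mono (B := B) (y := y) (show 3 ≤ 4 by omega)
  have s45 := sizeS_mono (B := B) (y := y) (show 4 ≤ 5 by omega)
  have p12 := sizeT_anti (B := B) (y := y) (show 1 ≤ 2 by omega)
  have p23 := sizeT_anti (B := B) (y := y) (show 2 ≤ 3 by omega)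
  have p34 := sizeT_anti (B := B) (y := y) (show 3 ≤ 4 by omega)
  have p45 := sizeT_anti (B := B) (y := y) (show 4 ≤ 5 by omega)
  -- `(s 3, p 3)` is the middle of the nine points from `(s 1, p 1)` to `(s 5, p 5)`.
  rcases le_total (sizeS B y 3) (sizeT B y 3) with h3 | h3
  · have i1 := hd.cut_ineq₁ hδc hΔr (hx 1) (notMem_levelT 2)
      (card_cutArcs_lower (k := 1) (by omega))
    have i2 := hd.cut_ineq₁ hδc hΔr (hx 2) (notMem_levelT 2)
      (card_cutArcs_diag (k := 1) (by omega))
    have i3 := hd.cut_ineq₁ hδc hΔr (hx 2) (notMem_levelT 3)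
      (card_cutArcs_lower (k := 2) (by omega))
    refine no_five_points (D := Δr - δc) (M := δc * (n - Δr)) (w₀ := sizeT B y 1 - sizeS B y 1)
      (w₁ := sizeT B y 2 - sizeS B y 1) (w₂ := sizeT B y 2 - sizeS B y 2)
      (w₃ := sizeT B y 3 - sizeS B y 2) (w₄ := sizeT B y 3 - sizeS B y 3)
      (a₁ := sizeS B y 1 - δc) (b₁ := Δr - sizeT B y 2) (a₂ := sizeS B y 2 - δc)
      (b₂ := Δr - sizeT B y 2) (a₃ := sizeS B y 2 - δc) (b₃ := Δr - sizeT B y 3)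
      ?_ ?_ ?_ ?_ ?_ ?_ ?_ ?_ ?_ ?_ ?_ ?_ ?_ <;> simp only [sizeS, sizeT] at * <;> linarith
  · have i1 := hd.cut_ineq₂ hδr hΔc (hx 4) (notMem_levelT 5)
      (card_cutArcs_lower (k := 4) (by omega))
    have i2 := hd.cut_ineq₂ hδr hΔc (hx 4) (notMem_levelT 4)
      (card_cutArcs_diag (k := 3) (by omega))
    have i3 := hd.cut_ineq₂ hδr hΔc (hx 3) (notMem_levelT 4)
      (card_cutArcs_lower (k := 3) (by omega))
    refine no_five_points (D := Δc - δr) (M := δr * (m - Δc)) (w₀ := sizeS B y 5 - sizeT B y 5)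
      (w₁ := sizeS B y 4 - sizeT B y 5) (w₂ := sizeS B y 4 - sizeT B y 4)
      (w₃ := sizeS B y 3 - sizeT B y 4) (w₄ := sizeS B y 3 - sizeT B y 3)
      (a₁ := sizeT B y 5 - δr) (b₁ := Δc - sizeS B y 4) (a₂ := sizeT B y 4 - δr)
      (b₂ := Δc - sizeS B y 4) (a₃ := sizeT B y 4 - δr) (b₃ := Δc - sizeS B y 3)
      ?_ ?_ ?_ ?_ ?_ ?_ ?_ ?_ ?_ ?_ ?_ ?_ ?_ <;> simp only [sizeS, sizeT] at * <;> linarith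

end levels

end auxiliary

/-- Corollary B.2. If `(Δ_r − δ_c)² ≤ 4δ_c(n − Δ_r)` and
`(Δ_c − δ_r)² ≤ 4δ_r(m − Δ_c)`, then `k_JS(r,c) ≤ 8`. -/
theorem stmt6 {m n : ℕ} (r : Fin m → ℕ) (c : Fin n → ℕ) (δr Δr δc Δc : ℕ)
    (hrpos : ∀ i, 1 ≤ r i) (hcpos : ∀ j, 1 ≤ c j)
    (hgraphical : ∃ B : BipGraph m n, memB r c B)
    (hδr : ∀ i, δr ≤ r i) (hδr' : ∃ i, r i = δr)
    (hΔr : ∀ i, r i ≤ Δr) (hΔr' : ∃ i, r i = Δr)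
    (hδc : ∀ j, δc ≤ c j) (hδc' : ∃ j, c j = δc)
    (hΔc : ∀ j, c j ≤ Δc) (hΔc' : ∃ j, c j = Δc)
    (hineq1 : ((Δr : ℤ) - (δc : ℤ)) ^ 2 ≤ 4 * (δc : ℤ) * ((n : ℤ) - (Δr : ℤ)))
    (hineq2 : ((Δc : ℤ) - (δr : ℤ)) ^ 2 ≤ 4 * (δr : ℤ) * ((m : ℤ) - (Δc : ℤ))) :
    ∀ B : BipGraph m n, memB' r c B →
      ∃ B' : BipGraph m n, memB r c B' ∧ bjsDistLe r c 8 B B' := by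
  intro B hB
  rcases hB with hB | ⟨x, y, hd⟩
  · exact ⟨B, hB, bjsDistLe_mono (by omega) (bjsDistLe_refl (Or.inl hB))⟩
  obtain ⟨B₀, hB₀⟩ := hgraphical
  have hrn : ∀ i, r i ≤ n := by
    intro i
    rw [← hB₀.1 i, degV_eq_card]
    exact (Finset.card_le_univ _).trans (Fintype.card_fin n).le
  have hcm : ∀ j, c j ≤ m := by
    intro j
    rw [← hB₀.2 j, degU_eq_card]
    exact (Finset.card_le_univ _).trans (Fintype.card_fin m).le
  obtain ⟨l, hl, hw⟩ := exists_altWalk hd hδr hΔr hδc hΔc hrn hcm hineq1 hineq2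
  obtain ⟨B', h1, h2⟩ := dist_of_altWalk l B x hd hw
  exact ⟨B', h1, bjsDistLe_mono (by omega) h2⟩
end

section
/- Let (γ,d) be a JDM instance with two regular classes. Then for every G ∈ G'(γ,d) there exists a sequence of graphs G = G_0, G_1, …, G_t with t ≤ 6 such that every G_i belongs to G'(γ,d), each G_{i+1} is obtained from G_i by a hinge flip, and G_t ∈ G(γ,d). In other words, the family of JDM instances with two regular classes is strongly stable with constant k = 6 for the hinge-flip chain. -/
/-!
Write `s v = deg G v - d v` for the excess of `v`, `σ` for the total excess over `V₁` (so the total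
over `V₂` is `-σ`), `L = ∑ |s v|` and `c` for the excess of the cut count over `γ`. A hinge flip
`ij → jk` lowers `s i` by one, raises `s k` by one, and preserves `σ` and `c` whenever `i` and `k`
lie in the same class. Since `d` is constant on each class, `s i > s k` for `i, k` in one class
means `deg i > deg k`, so `i` has a neighbour `j` that is not adjacent to `k` and the flip
`ij → jk` is available (`exists_pivot`). Hence, as long as some class contains excesses of both
signs, one flip lowers `L` by two; when there is no such class, `L = 2|σ|`.

The handshake lemma inside `V₁` gives `c ≡ σ (mod 2)`, and `|σ| ≤ 2`. Swapping the two classes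
if necessary, `σ ≥ 0`, which leaves three cases.

* `σ = 0`, `c = 0`: at most `L / 2 ≤ 2` flips inside the classes finish (`reach_zero`).
* `σ = 1`, `c = ±1`: after at most one flip `L = 2`, so degrees within a class differ by at most
  one. If `c = 1`, comparison with a realization `H` shows that there are a cut edge and a
  non-adjacent pair inside `V₂`; near-regularity then yields `v ∈ V₂` having both a neighbour
  `u ∈ V₁` and a non-neighbour `w ∈ V₂`, and `uv → vw` leads to the first case. If `c = -1`, some
  `v ∈ V₁` similarly has a neighbour in `V₁` and a non-neighbour in `V₂`. This takes
  `1 + 1 + 2 = 4` flips (`reach_one`).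
* `σ = 2`, `c = 0`: again some `v ∈ V₁` has a neighbour `x ∈ V₁` and a non-neighbour `y ∈ V₂`. If
  `s x ≤ 0`, one flip inside `V₁` first moves a unit of excess to `x`, without touching `vx` or
  `vy`. Then `xv → vy` does not increase `L` and leads to the second case, for a total of
  `1 + 1 + 4 = 6` flips (`reach_two`).
-/

open SimpleGraph
open scoped symmDiff

/-- The degree of vertex `v` in graph `G`. -/
noncomputable def deg {n : ℕ} (G : SimpleGraph (Fin n)) (v : Fin n) : ℕ :=
  (G.neighborSet v).ncard

/-- The number of cut edges of `G`: edges with one endpoint in the class `V₁`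
and one endpoint in the class `V₂ = V₁ᶜ`. -/
noncomputable def cutCount {n : ℕ} (V1 : Finset (Fin n)) (G : SimpleGraph (Fin n)) : ℕ :=
  {e ∈ G.edgeSet | ∃ u v : Fin n, e = s(u, v) ∧ u ∈ V1 ∧ v ∉ V1}.ncard

/-- The number of internal edges of `G` inside `V₁`. -/
noncomputable def intCount1 {n : ℕ} (V1 : Finset (Fin n)) (G : SimpleGraph (Fin n)) : ℕ :=
  {e ∈ G.edgeSet | ∃ u v : Fin n, e = s(u, v) ∧ u ∈ V1 ∧ v ∈ V1}.ncard

/-- The number of internal edges of `G` inside `V₂ = V₁ᶜ`. -/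
noncomputable def intCount2 {n : ℕ} (V1 : Finset (Fin n)) (G : SimpleGraph (Fin n)) : ℕ :=
  {e ∈ G.edgeSet | ∃ u v : Fin n, e = s(u, v) ∧ u ∉ V1 ∧ v ∉ V1}.ncard

/-- `G ∈ 𝒢(γ,d)`: vertex `i` has degree `d i` for every `i`, and `G` has
exactly `γ` cut edges. -/
def memPAM {n : ℕ} (V1 : Finset (Fin n)) (γ : ℕ) (d : Fin n → ℕ)
    (G : SimpleGraph (Fin n)) : Prop :=
  (∀ v, deg G v = d v) ∧ cutCount V1 G = γ

/-- `G ∈ 𝒢'(γ,d)`: the degree sequence `d'` of `G` and its number `γ'` of cut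
edges satisfy `Σ d'ᵢ = Σ dᵢ`, `Σ |dᵢ − d'ᵢ| ≤ 4`, and `|γ' − γ| ≤ 1`. -/
def memPAM' {n : ℕ} (V1 : Finset (Fin n)) (γ : ℕ) (d : Fin n → ℕ)
    (G : SimpleGraph (Fin n)) : Prop :=
  (∑ v, deg G v = ∑ v, d v) ∧
  (∑ v, |(d v : ℤ) - (deg G v : ℤ)| ≤ 4) ∧
  |(cutCount V1 G : ℤ) - (γ : ℤ)| ≤ 1

/-- A hinge flip: replace an edge `{i,j}` of `G` by a non-edge `{j,k}`. -/
def hingeFlip {n : ℕ} (G H : SimpleGraph (Fin n)) : Prop :=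
  ∃ i j k : Fin n, G.Adj i j ∧ j ≠ k ∧ ¬ G.Adj j k ∧
    H = (G.deleteEdges {s(i, j)}) ⊔ fromEdgeSet {s(j, k)}

/-! ### Adjacency indicators and counting -/

open Classical in
/-- The integer-valued adjacency indicator of `G`. -/
noncomputable def adjI {n : ℕ} (G : SimpleGraph (Fin n)) (v w : Fin n) : ℤ :=
  if G.Adj v w then 1 else 0

lemma adjI_nonneg {n : ℕ} (G : SimpleGraph (Fin n)) (v w : Fin n) : 0 ≤ adjI G v w := by
  unfold adjI; split_ifs <;> simp

lemma adjI_le_one {n : ℕ} (G : SimpleGraph (Fin n)) (v w : Fin n) : adjI G v w ≤ 1 := by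
  unfold adjI; split_ifs <;> simp

lemma adjI_comm {n : ℕ} (G : SimpleGraph (Fin n)) (v w : Fin n) : adjI G v w = adjI G w v := by
  classical
  simp only [adjI, G.adj_comm v w]

lemma deg_eq_sum {n : ℕ} (G : SimpleGraph (Fin n)) (v : Fin n) :
    (deg G v : ℤ) = ∑ w, adjI G v w := by
  classical
  unfold deg adjI
  rw [Finset.sum_boole]
  congr 1
  rw [← Set.ncard_coe_finset]
  congr 1
  ext w
  simp

lemma cutCount_eq_sum {n : ℕ} (V1 : Finset (Fin n)) (G : SimpleGraph (Fin n)) :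
    (cutCount V1 G : ℤ) = ∑ v ∈ V1, ∑ w ∈ V1ᶜ, adjI G v w := by
  classical
  unfold cutCount adjI
  rw [← Finset.sum_product', Finset.sum_boole]
  congr 1
  rw [← Set.ncard_coe_finset,
    ← Set.InjOn.ncard_image (f := fun p : Fin n × Fin n => s(p.1, p.2))]
  · congr 1
    ext e
    simp only [Set.mem_ofPred_eq, Set.mem_image, Finset.mem_coe, Finset.mem_filter,
      Finset.mem_product, Finset.mem_compl, Prod.exists]
    constructor
    · rintro ⟨he, u, v, rfl, hu, hv⟩
      exact ⟨u, v, ⟨⟨hu, hv⟩, he⟩, rfl⟩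
    · rintro ⟨u, v, ⟨⟨hu, hv⟩, he⟩, rfl⟩
      exact ⟨he, u, v, rfl, hu, hv⟩
  · rintro ⟨a, b⟩ h ⟨a', b'⟩ h' heq
    simp only [Finset.mem_coe, Finset.mem_filter, Finset.mem_product, Finset.mem_compl] at h h'
    simp only [Sym2.eq_iff] at heq
    rcases heq with ⟨rfl, rfl⟩ | ⟨rfl, rfl⟩
    · rfl
    · exact absurd h.1.1 h'.1.2

lemma cutCount_compl {n : ℕ} (V1 : Finset (Fin n)) (G : SimpleGraph (Fin n)) :
    cutCount V1ᶜ G = cutCount V1 G := by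
  have h1 := cutCount_eq_sum V1 G
  have h2 := cutCount_eq_sum V1ᶜ G
  rw [compl_compl, Finset.sum_comm] at h2
  have : (cutCount V1ᶜ G : ℤ) = cutCount V1 G := by
    rw [h1, h2]
    exact Finset.sum_congr rfl fun _ _ => Finset.sum_congr rfl fun _ _ => adjI_comm _ _ _
  exact_mod_cast this

/-- Twice the number of edges of `G` with both endpoints in `S`, as a sum over ordered pairs. -/
noncomputable def inner2 {n : ℕ} (S : Finset (Fin n)) (G : SimpleGraph (Fin n)) : ℤ :=
  ∑ v ∈ S, ∑ w ∈ S, adjI G v w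

lemma inner2_nonneg {n : ℕ} (S : Finset (Fin n)) (G : SimpleGraph (Fin n)) : 0 ≤ inner2 S G :=
  Finset.sum_nonneg fun _ _ => Finset.sum_nonneg fun _ _ => adjI_nonneg _ _ _

/-- Handshake lemma inside `S`: ordered adjacent pairs cancel modulo two under the swap. -/
lemma inner2_even {n : ℕ} (S : Finset (Fin n)) (G : SimpleGraph (Fin n)) :
    (2 : ℤ) ∣ inner2 S G := by
  classical
  have h : ((inner2 S G : ℤ) : ZMod 2) = 0 := by
    unfold inner2
    rw [← Finset.sum_product']
    push_cast
    refine Finset.sum_involution (fun p _ => (p.2, p.1)) ?_ ?_ ?_ ?_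
    · intro p _
      rw [adjI_comm G p.2 p.1]
      exact CharTwo.add_self_eq_zero _
    · rintro ⟨a, b⟩ _ hne heq
      simp only [Prod.mk.injEq] at heq
      obtain ⟨rfl, -⟩ := heq
      exact hne (by simp [adjI])
    · rintro ⟨a, b⟩ h
      simp only [Finset.mem_product] at h ⊢
      exact ⟨h.2, h.1⟩
    · rintro ⟨a, b⟩ _; rfl
  exact (ZMod.intCast_zmod_eq_zero_iff_dvd _ 2).1 h

lemma sum_deg_eq {n : ℕ} (V1 : Finset (Fin n)) (G : SimpleGraph (Fin n)) :
    ∑ v ∈ V1, (deg G v : ℤ) = inner2 V1 G + cutCount V1 G := by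
  rw [cutCount_eq_sum, inner2, ← Finset.sum_add_distrib]
  refine Finset.sum_congr rfl fun v _ => ?_
  rw [deg_eq_sum, Finset.sum_add_sum_compl]

lemma exists_edge_of_inner2_pos {n : ℕ} {S : Finset (Fin n)} {G : SimpleGraph (Fin n)}
    (h : 0 < inner2 S G) : ∃ p ∈ S, ∃ q ∈ S, G.Adj p q := by
  by_contra! hno
  refine h.ne' (Finset.sum_eq_zero fun p hp => Finset.sum_eq_zero fun q hq => ?_)
  simp [adjI, hno p hp q hq]

lemma exists_nonedge_of_inner2_lt {n : ℕ} {S : Finset (Fin n)} {G H : SimpleGraph (Fin n)}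
    (h : inner2 S G < inner2 S H) : ∃ p ∈ S, ∃ q ∈ S, p ≠ q ∧ ¬ G.Adj p q := by
  by_contra! hno
  refine h.not_ge (Finset.sum_le_sum fun p hp => Finset.sum_le_sum fun q hq => ?_)
  by_cases hpq : p = q
  · subst hpq; simp [adjI]
  · have := adjI_le_one H p q
    simpa [adjI, hno p hp q hq hpq] using this

lemma exists_cut_edge {n : ℕ} {V1 : Finset (Fin n)} {G : SimpleGraph (Fin n)}
    (h : 0 < cutCount V1 G) : ∃ p ∈ V1, ∃ q, q ∉ V1 ∧ G.Adj p q := by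
  by_contra! hno
  have h' : (0 : ℤ) < cutCount V1 G := by exact_mod_cast h
  rw [cutCount_eq_sum] at h'
  refine h'.ne' (Finset.sum_eq_zero fun p hp => Finset.sum_eq_zero fun q hq => ?_)
  simp [adjI, hno p hp q (by simpa using hq)]

lemma exists_cut_nonedge {n : ℕ} {V1 : Finset (Fin n)} {G : SimpleGraph (Fin n)}
    (h : cutCount V1 G < V1.card * V1ᶜ.card) : ∃ p ∈ V1, ∃ q, q ∉ V1 ∧ ¬ G.Adj p q := by
  by_contra! hno
  have h' : (cutCount V1 G : ℤ) < V1.card * V1ᶜ.card := by exact_mod_cast h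
  rw [cutCount_eq_sum, Finset.sum_congr rfl fun p hp => Finset.sum_congr rfl fun q hq =>
    show adjI G p q = 1 by simp [adjI, hno p hp q (by simpa using hq)]] at h'
  simp at h'

/-! ### Hinge flips and their effect on the excesses -/

/-- The graph obtained from `G` by replacing the edge `ij` by `jk`. -/
def flipG {n : ℕ} (G : SimpleGraph (Fin n)) (i j k : Fin n) : SimpleGraph (Fin n) :=
  (G.deleteEdges {s(i, j)}) ⊔ fromEdgeSet {s(j, k)}

/-- The conditions under which `flipG G i j k` is a hinge flip of `G`. -/
def CanFlip {n : ℕ} (G : SimpleGraph (Fin n)) (i j k : Fin n) : Prop :=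
  G.Adj i j ∧ j ≠ k ∧ ¬ G.Adj j k

lemma CanFlip.hinge {n : ℕ} {G : SimpleGraph (Fin n)} {i j k : Fin n} (h : CanFlip G i j k) :
    hingeFlip G (flipG G i j k) :=
  ⟨i, j, k, h.1, h.2.1, h.2.2, rfl⟩

lemma flipG_adj {n : ℕ} (G : SimpleGraph (Fin n)) (i j k a b : Fin n) :
    (flipG G i j k).Adj a b ↔ (G.Adj a b ∧ s(a, b) ≠ s(i, j)) ∨ (s(a, b) = s(j, k) ∧ a ≠ b) := by
  simp [flipG, deleteEdges_adj, fromEdgeSet_adj]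

lemma adjI_flip {n : ℕ} {G : SimpleGraph (Fin n)} {i j k : Fin n} (h : CanFlip G i j k)
    (v w : Fin n) :
    adjI (flipG G i j k) v w = adjI G v w
      - (if v = i then if w = j then 1 else 0 else 0)
      - (if v = j then if w = i then 1 else 0 else 0)
      + (if v = j then if w = k then 1 else 0 else 0)
      + (if v = k then if w = j then 1 else 0 else 0) := by
  obtain ⟨h1, h2, h3⟩ := h
  have hij := h1.ne
  have h1' := h1.symm
  have h3' : ¬ G.Adj k j := fun h => h3 h.symm
  have hik : i ≠ k := by rintro rfl; exact h3 h1'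
  classical
  unfold adjI
  simp only [flipG_adj, Sym2.eq_iff, ne_eq]
  grind

/-- Effect of a flip on the number of adjacent ordered pairs in `S × T`. -/
lemma sum_adjI_flip {n : ℕ} {G : SimpleGraph (Fin n)} {i j k : Fin n} (h : CanFlip G i j k)
    (S T : Finset (Fin n)) :
    ∑ v ∈ S, ∑ w ∈ T, adjI (flipG G i j k) v w = ∑ v ∈ S, ∑ w ∈ T, adjI G v w
      - (if i ∈ S then if j ∈ T then 1 else 0 else 0)
      - (if j ∈ S then if i ∈ T then 1 else 0 else 0)
      + (if j ∈ S then if k ∈ T then 1 else 0 else 0)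
      + (if k ∈ S then if j ∈ T then 1 else 0 else 0) := by
  have key : ∀ a b : Fin n, ∑ v ∈ S, ∑ w ∈ T, (if v = a then if w = b then (1 : ℤ) else 0 else 0)
      = if a ∈ S then if b ∈ T then 1 else 0 else 0 := by
    intro a b
    have : ∀ v, ∑ w ∈ T, (if v = a then if w = b then (1 : ℤ) else 0 else 0)
        = if v = a then (if b ∈ T then 1 else 0) else 0 := by
      intro v
      split_ifs <;> simp_all
    simp only [this]
    simp
  simp only [adjI_flip h, Finset.sum_add_distrib, Finset.sum_sub_distrib, key]

/-- The excess of the degree of `v` over its prescribed value. -/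
noncomputable def exc {n : ℕ} (d : Fin n → ℕ) (G : SimpleGraph (Fin n)) (v : Fin n) : ℤ :=
  (deg G v : ℤ) - d v

lemma exc_flip {n : ℕ} (d : Fin n → ℕ) {G : SimpleGraph (Fin n)} {i j k : Fin n}
    (h : CanFlip G i j k) (v : Fin n) :
    exc d (flipG G i j k) v = exc d G v - (if v = i then 1 else 0) + (if v = k then 1 else 0) := by
  have := sum_adjI_flip h {v} Finset.univ
  simp only [Finset.sum_singleton, ← deg_eq_sum, Finset.mem_singleton, Finset.mem_univ,
    if_true] at this
  unfold exc
  rw [this]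
  simp only [@eq_comm _ v]
  ring

/-- `G` has total excess `σ` on `V₁` and `-σ` on its complement, the absolute excesses add up to
at most `L`, and there are `γ + c` cut edges. -/
structure St {n : ℕ} (V1 : Finset (Fin n)) (γ : ℕ) (d : Fin n → ℕ) (σ c L : ℤ)
    (G : SimpleGraph (Fin n)) : Prop where
  s1 : ∑ v ∈ V1, exc d G v = σ
  s2 : ∑ v ∈ V1ᶜ, exc d G v = -σ
  l : ∑ v, |exc d G v| ≤ L
  cut : (cutCount V1 G : ℤ) = γ + c

lemma St.cast {n : ℕ} {V1 : Finset (Fin n)} {γ : ℕ} {d : Fin n → ℕ} {σ c L σ' c' L' : ℤ}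
    {G : SimpleGraph (Fin n)} (h : St V1 γ d σ c L G) (h1 : σ = σ') (h2 : c = c') (h3 : L ≤ L') :
    St V1 γ d σ' c' L' G := by
  subst h1 h2
  exact ⟨h.s1, h.s2, h.l.trans h3, h.cut⟩

lemma St.mem {n : ℕ} {V1 : Finset (Fin n)} {γ : ℕ} {d : Fin n → ℕ} {σ c L : ℤ}
    {G : SimpleGraph (Fin n)} (h : St V1 γ d σ c L G) (hL : L ≤ 4) (hc : |c| ≤ 1) :
    memPAM' V1 γ d G := by
  refine ⟨?_, ?_, ?_⟩
  · have h0 : ∑ v, exc d G v = 0 := by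
      rw [← Finset.sum_add_sum_compl V1, h.s1, h.s2]; ring
    simp only [exc, Finset.sum_sub_distrib] at h0
    have : (∑ v, (deg G v : ℤ)) = ∑ v, (d v : ℤ) := by linarith
    exact_mod_cast this
  · refine le_trans (le_of_eq ?_) (h.l.trans hL)
    exact Finset.sum_congr rfl fun v _ => by rw [exc, abs_sub_comm]
  · rw [h.cut]; simpa using hc

lemma St.flip {n : ℕ} {V1 : Finset (Fin n)} {γ : ℕ} {d : Fin n → ℕ} {σ c L : ℤ}
    {G : SimpleGraph (Fin n)} (h : St V1 γ d σ c L G) {i j k : Fin n} (hf : CanFlip G i j k) :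
    St V1 γ d (σ - (if i ∈ V1 then 1 else 0) + (if k ∈ V1 then 1 else 0))
      (c - (if i ∈ V1 ↔ j ∈ V1 then 0 else 1) + (if k ∈ V1 ↔ j ∈ V1 then 0 else 1))
      (L + (|exc d G i - 1| - |exc d G i|) + (|exc d G k + 1| - |exc d G k|))
      (flipG G i j k) := by
  have hik : i ≠ k := by rintro rfl; exact hf.2.2 hf.1.symm
  refine ⟨?_, ?_, ?_, ?_⟩
  · simp only [exc_flip d hf, Finset.sum_add_distrib, Finset.sum_sub_distrib, h.s1,
      Finset.sum_ite_eq']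
  · simp only [exc_flip d hf, Finset.sum_add_distrib, Finset.sum_sub_distrib, h.s2,
      Finset.sum_ite_eq', Finset.mem_compl]
    split_ifs <;> simp_all <;> ring
  · have : ∀ v, |exc d (flipG G i j k) v| = |exc d G v|
        + (if v = i then |exc d G i - 1| - |exc d G i| else 0)
        + (if v = k then |exc d G k + 1| - |exc d G k| else 0) := by
      intro v
      rw [exc_flip d hf]
      by_cases h1 : v = i
      · subst h1; simp [hik]
      · by_cases h2 : v = k
        · subst h2; simp [h1]
        · simp [h1, h2]
    simp only [this, Finset.sum_add_distrib, Finset.sum_ite_eq', Finset.mem_univ, if_true]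
    linarith [h.l]
  · have h1 := h.cut
    rw [cutCount_eq_sum] at h1 ⊢
    rw [sum_adjI_flip hf, h1]
    simp only [Finset.mem_compl]
    split_ifs <;> first | (exfalso; tauto) | ring

/-! ### Paths of hinge flips -/

/-- `G` can be transformed into a realization by at most `m` hinge flips inside `𝒢'(γ,d)`. -/
def Reach {n : ℕ} (V1 : Finset (Fin n)) (γ : ℕ) (d : Fin n → ℕ) (m : ℕ)
    (G : SimpleGraph (Fin n)) : Prop :=
  ∃ t ≤ m, ∃ f : ℕ → SimpleGraph (Fin n), f 0 = G ∧
    (∀ i ≤ t, memPAM' V1 γ d (f i)) ∧ (∀ i < t, hingeFlip (f i) (f (i+1))) ∧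
    memPAM V1 γ d (f t)

lemma Reach.mono {n : ℕ} {V1 : Finset (Fin n)} {γ : ℕ} {d : Fin n → ℕ} {m m' : ℕ}
    {G : SimpleGraph (Fin n)} (h : Reach V1 γ d m G) (hm : m ≤ m') : Reach V1 γ d m' G := by
  obtain ⟨t, ht, h⟩ := h
  exact ⟨t, ht.trans hm, h⟩

lemma Reach.cons {n : ℕ} {V1 : Finset (Fin n)} {γ : ℕ} {d : Fin n → ℕ} {m : ℕ}
    {G G' : SimpleGraph (Fin n)} (hG : memPAM' V1 γ d G) (hf : hingeFlip G G')
    (h : Reach V1 γ d m G') : Reach V1 γ d (m + 1) G := by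
  obtain ⟨t, ht, f, rfl, h1, h2, h3⟩ := h
  refine ⟨t + 1, by omega, fun i => Nat.casesOn i G f, rfl, ?_, ?_, h3⟩
  · rintro (_ | i) hi
    · exact hG
    · exact h1 i (by omega)
  · rintro (_ | i) hi
    · exact hf
    · exact h2 i (by omega)

lemma memPAM'_compl {n : ℕ} {V1 : Finset (Fin n)} {γ : ℕ} {d : Fin n → ℕ}
    {G : SimpleGraph (Fin n)} : memPAM' V1ᶜ γ d G ↔ memPAM' V1 γ d G := by
  simp only [memPAM', cutCount_compl]

lemma memPAM_compl {n : ℕ} {V1 : Finset (Fin n)} {γ : ℕ} {d : Fin n → ℕ}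
    {G : SimpleGraph (Fin n)} : memPAM V1ᶜ γ d G ↔ memPAM V1 γ d G := by
  simp only [memPAM, cutCount_compl]

lemma reach_compl {n : ℕ} {V1 : Finset (Fin n)} {γ : ℕ} {d : Fin n → ℕ} {m : ℕ}
    {G : SimpleGraph (Fin n)} : Reach V1ᶜ γ d m G ↔ Reach V1 γ d m G := by
  simp only [Reach, memPAM'_compl, memPAM_compl]

/-! ### Flips inside a class -/

/-- `d` takes a single value on `V₁` and a single value on its complement. -/
def ClassConst {n : ℕ} (V1 : Finset (Fin n)) (d : Fin n → ℕ) : Prop :=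
  ∀ u v, (u ∈ V1 ↔ v ∈ V1) → d u = d v

/-- A vertex `i` of larger degree than `k` has a neighbour `j ≠ k` not adjacent to `k`: otherwise
exchanging the roles of `i` and `k` would embed the neighbours of `i` into those of `k`. -/
lemma exists_pivot {n : ℕ} {G : SimpleGraph (Fin n)} {i k : Fin n} (h : deg G k < deg G i) :
    ∃ j, CanFlip G i j k := by
  classical
  by_contra! hno
  refine h.not_ge ?_
  have hsub : ∀ j, G.Adj i j → j ≠ k → G.Adj j k := by
    intro j h1 h2
    by_contra h3
    exact hno j ⟨h1, h2, h3⟩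
  refine Set.ncard_le_ncard_of_injOn (Equiv.swap i k) ?_ (Equiv.injective _).injOn
    (Set.toFinite _)
  intro j hj
  simp only [mem_neighborSet] at hj ⊢
  have hji : j ≠ i := hj.ne'
  by_cases hjk : j = k
  · subst hjk; simpa using hj.symm
  · rw [Equiv.swap_apply_of_ne_of_ne hji hjk]
    exact (hsub j hj hjk).symm

lemma exists_pivot_of_exc {n : ℕ} {V1 : Finset (Fin n)} {d : Fin n → ℕ} (hd : ClassConst V1 d)
    {G : SimpleGraph (Fin n)} {i k : Fin n} (hik : i ∈ V1 ↔ k ∈ V1)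
    (h : exc d G k < exc d G i) : ∃ j, CanFlip G i j k := by
  apply exists_pivot
  have := hd i k hik
  unfold exc at h
  rw [this] at h
  have : (deg G k : ℤ) < deg G i := by linarith
  exact_mod_cast this

lemma sum_abs_of_no_pair {n : ℕ} (S : Finset (Fin n)) (f : Fin n → ℤ)
    (h : ∀ i ∈ S, ∀ k ∈ S, 0 < f i → 0 ≤ f k) : ∑ v ∈ S, |f v| = |∑ v ∈ S, f v| := by
  by_cases hp : ∃ i ∈ S, 0 < f i
  · obtain ⟨i, hi, hpos⟩ := hp
    exact (Finset.abs_sum_of_nonneg fun k hk => h i hi k hk hpos).symm ▸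
      Finset.sum_congr rfl fun k hk => abs_of_nonneg (h i hi k hk hpos)
  · push Not at hp
    rw [abs_of_nonpos (Finset.sum_nonpos hp), ← Finset.sum_neg_distrib]
    exact Finset.sum_congr rfl fun k hk => abs_of_nonpos (hp k hk)

/-- Either one flip inside a class lowers the total absolute excess by two, or no class has
excesses of both signs and the total absolute excess is `2|σ|`. -/
lemma descend_or_bound {n : ℕ} {V1 : Finset (Fin n)} {γ : ℕ} {d : Fin n → ℕ} (hd : ClassConst V1 d)
    {σ c L : ℤ} {G : SimpleGraph (Fin n)} (h : St V1 γ d σ c L G) :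
    (∃ G', hingeFlip G G' ∧ St V1 γ d σ c (L - 2) G') ∨ St V1 γ d σ c (2 * |σ|) G := by
  by_cases hp : ∃ i k, (i ∈ V1 ↔ k ∈ V1) ∧ 0 < exc d G i ∧ exc d G k < 0
  · obtain ⟨i, k, hik, hi, hk⟩ := hp
    obtain ⟨j, hj⟩ := exists_pivot_of_exc hd hik (hk.trans hi)
    refine Or.inl ⟨_, hj.hinge, (h.flip hj).cast ?_ ?_ ?_⟩
    · simp only [hik]; ring
    · simp only [hik]; ring
    · rw [abs_of_nonneg (by omega : 0 ≤ exc d G i - 1), abs_of_pos hi, abs_of_neg hk,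
        abs_of_nonpos (by omega : exc d G k + 1 ≤ 0)]
      omega
  · push Not at hp
    refine Or.inr ⟨h.s1, h.s2, ?_, h.cut⟩
    rw [← Finset.sum_add_sum_compl V1, sum_abs_of_no_pair, sum_abs_of_no_pair, h.s1, h.s2, abs_neg]
    · omega
    · intro i hi k hk
      simp only [Finset.mem_compl] at hi hk
      exact hp i k (by tauto)
    · intro i hi k hk
      exact hp i k (by tauto)

lemma St.realizes {n : ℕ} {V1 : Finset (Fin n)} {γ : ℕ} {d : Fin n → ℕ} {σ L : ℤ}
    {G : SimpleGraph (Fin n)} (h : St V1 γ d σ 0 L G) (hL : L ≤ 0) : memPAM V1 γ d G := by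
  constructor
  · intro v
    have h0 : ∑ v, |exc d G v| = 0 :=
      le_antisymm (h.l.trans hL) (Finset.sum_nonneg fun _ _ => abs_nonneg _)
    have := (Finset.sum_eq_zero_iff_of_nonneg fun _ _ => abs_nonneg _).1 h0 v (Finset.mem_univ v)
    rw [abs_eq_zero, exc] at this
    omega
  · have := h.cut
    omega

lemma reach_zero {n : ℕ} {V1 : Finset (Fin n)} {γ : ℕ} {d : Fin n → ℕ} (hd : ClassConst V1 d)
    (m : ℕ) (hm : m ≤ 2) {G : SimpleGraph (Fin n)} (h : St V1 γ d 0 0 (2 * m) G) :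
    Reach V1 γ d m G := by
  induction m generalizing G with
  | zero =>
    refine ⟨0, le_rfl, fun _ => G, rfl, fun _ _ => h.mem (by simp) (by simp), ?_,
      h.realizes (by simp)⟩
    intro i hi; omega
  | succ m ih =>
    rcases descend_or_bound hd h with ⟨G', hf, hG'⟩ | h0
    · refine (ih (by omega) (hG'.cast rfl rfl ?_)).cons (h.mem ?_ (by simp)) hf
      · push_cast; linarith
      · push_cast; omega
    · exact (ih (by omega) (h0.cast rfl rfl (by simp))).mono (by omega)

/-! ### Pivots that change the cut count -/

/-- If `V₁` spans an edge `pq` and some cut pair is a non-edge, then some vertex of `V₁` has both a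
neighbour in `V₁` and a non-neighbour outside, unless two distinct vertices of `V₁` have degree
at least two more than a third one. -/
lemma exists_pivot_up {n : ℕ} {V1 : Finset (Fin n)} {G : SimpleGraph (Fin n)}
    {p q a y : Fin n} (hp : p ∈ V1) (hq : q ∈ V1) (hpq : G.Adj p q)
    (ha : a ∈ V1) (hy : y ∉ V1) (hay : ¬ G.Adj a y) :
    (∃ v ∈ V1, ∃ x ∈ V1, ∃ y, y ∉ V1 ∧ G.Adj v x ∧ ¬ G.Adj v y) ∨
      (deg G a + 2 ≤ deg G p ∧ deg G a + 2 ≤ deg G q) := by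
  classical
  by_cases hno : ∃ v ∈ V1, ∃ x ∈ V1, ∃ y, y ∉ V1 ∧ G.Adj v x ∧ ¬ G.Adj v y
  · exact Or.inl hno
  right
  push Not at hno
  -- A vertex of `V₁` with a neighbour in `V₁` sees the whole complement, so has degree `> |V₂|`.
  have big : ∀ p ∈ V1, ∀ q ∈ V1, G.Adj p q → V1ᶜ.card + 1 ≤ deg G p := by
    intro p hp q hq hpq
    rw [← Finset.card_insert_of_notMem (a := q) (s := V1ᶜ) (by simpa using hq),
      ← Set.ncard_coe_finset]
    refine Set.ncard_le_ncard ?_ (Set.toFinite _)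
    intro z hz
    simp only [Finset.coe_insert, Set.mem_insert_iff, Finset.mem_coe, Finset.mem_compl] at hz
    rcases hz with rfl | hz
    · exact hpq
    · exact hno p hp q hq z hz hpq
  have small : deg G a + 1 ≤ V1ᶜ.card := by
    rw [← Finset.card_erase_add_one (s := V1ᶜ) (a := y) (by simpa using hy)]
    refine Nat.succ_le_succ ?_
    rw [← Set.ncard_coe_finset]
    refine Set.ncard_le_ncard ?_ (Set.toFinite _)
    intro z hz
    simp only [mem_neighborSet] at hz
    simp only [Finset.mem_coe, Finset.mem_erase, Finset.mem_compl]
    refine ⟨?_, fun hz1 => hay (hno a ha z hz1 y hy hz)⟩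
    rintro rfl
    exact hay hz
  have h1 := big p hp q hq hpq
  have h2 := big q hq p hp hpq.symm
  omega

/-- If there is a cut edge `up` and a non-adjacent pair `a ≠ b` outside `V₁`, then some vertex
outside `V₁` has both a neighbour in `V₁` and a non-neighbour outside, unless `p` has degree at
least two more than `a`. -/
lemma exists_pivot_down {n : ℕ} {V1 : Finset (Fin n)} {G : SimpleGraph (Fin n)}
    {u p a b : Fin n} (hu : u ∈ V1) (hp : p ∉ V1) (hup : G.Adj u p)
    (ha : a ∉ V1) (hb : b ∉ V1) (hne : a ≠ b) (hab : ¬ G.Adj a b) :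
    (∃ v, v ∉ V1 ∧ ∃ x ∈ V1, ∃ y, y ∉ V1 ∧ v ≠ y ∧ G.Adj v x ∧ ¬ G.Adj v y) ∨
      deg G a + 2 ≤ deg G p := by
  classical
  by_cases hno : ∃ v, v ∉ V1 ∧ ∃ x ∈ V1, ∃ y, y ∉ V1 ∧ v ≠ y ∧ G.Adj v x ∧ ¬ G.Adj v y
  · exact Or.inl hno
  right
  push Not at hno
  -- `p` sees `u` and all of `V₂ \ {p}`, while `a` sees only vertices of `V₂ \ {a, b}`.
  have big : V1ᶜ.card ≤ deg G p := by
    rw [← Finset.card_erase_add_one (s := V1ᶜ) (a := p) (by simpa using hp),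
      ← Finset.card_insert_of_notMem (a := u) (s := V1ᶜ.erase p) (by simp [hu]),
      ← Set.ncard_coe_finset]
    refine Set.ncard_le_ncard ?_ (Set.toFinite _)
    intro z hz
    simp only [Finset.coe_insert, Set.mem_insert_iff, Finset.mem_coe, Finset.mem_compl,
      Finset.mem_erase] at hz
    rcases hz with rfl | hz
    · exact hup.symm
    · exact hno p hp u hu z hz.2 hz.1.symm hup.symm
  have small : deg G a + 2 ≤ V1ᶜ.card := by
    rw [← Finset.card_erase_add_one (s := V1ᶜ) (a := a) (by simpa using ha),
      ← Finset.card_erase_add_one (s := V1ᶜ.erase a) (a := b) (by simp [hb, hne.symm])]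
    refine Nat.succ_le_succ (Nat.succ_le_succ ?_)
    rw [← Set.ncard_coe_finset]
    refine Set.ncard_le_ncard ?_ (Set.toFinite _)
    intro z hz
    simp only [mem_neighborSet] at hz
    simp only [Finset.mem_coe, Finset.mem_erase, Finset.mem_compl]
    refine ⟨?_, hz.ne', fun hz1 => hab (hno a ha z hz1 b hb hne hz)⟩
    rintro rfl
    exact hab hz
  omega

/-! ### Comparison with a realization -/

/-- Twice the number of edges inside `V₁` exceeds that of a realization by `σ - c`. -/
lemma St.inner2_fst {n : ℕ} {V1 : Finset (Fin n)} {γ : ℕ} {d : Fin n → ℕ} {σ c L : ℤ}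
    {G H : SimpleGraph (Fin n)} (h : St V1 γ d σ c L G) (hH : memPAM V1 γ d H) :
    inner2 V1 G = inner2 V1 H + σ - c := by
  have h1 := sum_deg_eq V1 G
  have h2 := sum_deg_eq V1 H
  have h3 := h.s1
  have h4 := h.cut
  simp only [exc, Finset.sum_sub_distrib] at h3
  simp only [hH.1, hH.2] at h2
  linarith

/-- Twice the number of edges outside `V₁` exceeds that of a realization by `-σ - c`. -/
lemma St.inner2_snd {n : ℕ} {V1 : Finset (Fin n)} {γ : ℕ} {d : Fin n → ℕ} {σ c L : ℤ}
    {G H : SimpleGraph (Fin n)} (h : St V1 γ d σ c L G) (hH : memPAM V1 γ d H) :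
    inner2 V1ᶜ G = inner2 V1ᶜ H - σ - c := by
  have h1 := sum_deg_eq V1ᶜ G
  have h2 := sum_deg_eq V1ᶜ H
  have h3 := h.s2
  have h4 := h.cut
  simp only [exc, Finset.sum_sub_distrib] at h3
  simp only [hH.1, cutCount_compl, hH.2] at h2
  rw [cutCount_compl] at h1
  linarith

/-- The complement absorbs at least `|σ|` of the total absolute excess. -/
lemma St.sum_abs_fst {n : ℕ} {V1 : Finset (Fin n)} {γ : ℕ} {d : Fin n → ℕ} {σ c L : ℤ}
    {G : SimpleGraph (Fin n)} (h : St V1 γ d σ c L G) :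
    ∑ v ∈ V1, |exc d G v| ≤ L - |σ| := by
  have h1 := Finset.abs_sum_le_sum_abs (exc d G) V1ᶜ
  rw [h.s2, abs_neg] at h1
  have h2 := h.l
  rw [← Finset.sum_add_sum_compl V1] at h2
  linarith

lemma St.sum_abs_snd {n : ℕ} {V1 : Finset (Fin n)} {γ : ℕ} {d : Fin n → ℕ} {σ c L : ℤ}
    {G : SimpleGraph (Fin n)} (h : St V1 γ d σ c L G) :
    ∑ v ∈ V1ᶜ, |exc d G v| ≤ L - |σ| := by
  have h1 := Finset.abs_sum_le_sum_abs (exc d G) V1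
  rw [h.s1] at h1
  have h2 := h.l
  rw [← Finset.sum_add_sum_compl V1] at h2
  linarith

lemma abs_add_abs_le_sum {n : ℕ} (S : Finset (Fin n)) (f : Fin n → ℤ) {a b : Fin n}
    (ha : a ∈ S) (hb : b ∈ S) (hab : a ≠ b) : |f a| + |f b| ≤ ∑ v ∈ S, |f v| := by
  rw [← Finset.sum_pair (f := fun v => |f v|) hab]
  refine Finset.sum_le_sum_of_subset_of_nonneg ?_ fun _ _ _ => abs_nonneg _
  intro z hz
  simp only [Finset.mem_insert, Finset.mem_singleton] at hz
  rcases hz with rfl | rfl <;> assumption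

/-! ### The cases `σ = 1` and `σ = 2` -/

lemma reach_one_aux {n : ℕ} {V1 : Finset (Fin n)} {γ : ℕ} {d : Fin n → ℕ}
    (hd : ClassConst V1 d) (hγ : γ < V1.card * V1ᶜ.card)
    {H : SimpleGraph (Fin n)} (hH : memPAM V1 γ d H) {c : ℤ} (hc : c = 1 ∨ c = -1)
    {G : SimpleGraph (Fin n)} (h : St V1 γ d 1 c 2 G) : Reach V1 γ d 3 G := by
  have hmem : memPAM' V1 γ d G := h.mem (by norm_num) (by rcases hc with rfl | rfl <;> simp)
  -- Whatever its effect on the excesses, a single flip raises `L` from `2` to at most `4`.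
  have fin : ∀ {x v y : Fin n}, CanFlip G x v y → x ∈ V1 → y ∉ V1 →
      (c + (if v ∈ V1 then 1 else -1) = 0) → Reach V1 γ d 3 G := by
    intro x v y hf hx hy hcv
    refine (reach_zero hd 2 le_rfl ((h.flip hf).cast ?_ ?_ ?_)).cons hmem hf.hinge
    · simp [hx, hy]
    · by_cases hv : v ∈ V1 <;> simp [hx, hy, hv] at hcv ⊢ <;> linarith
    · have h1 := abs_sub (exc d G x) 1
      have h2 := abs_add_le (exc d G y) 1
      simp only [abs_one] at h1 h2
      push_cast
      linarith
  -- Degrees within a class differ by at most one.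
  have near : ∀ S : Finset (Fin n), (∑ v ∈ S, |exc d G v| ≤ 1) →
      (∀ u ∈ S, ∀ v ∈ S, d u = d v) → ∀ a ∈ S, ∀ b ∈ S, ¬ (deg G a + 2 ≤ deg G b) := by
    intro S hS hdS a ha b hb hlt
    have hab : a ≠ b := by rintro rfl; omega
    have h1 := abs_add_abs_le_sum S (exc d G) ha hb hab
    have h2 := hdS a ha b hb
    have h3 := neg_abs_le (exc d G a)
    have h4 := le_abs_self (exc d G b)
    have h5 : exc d G a + 2 ≤ exc d G b := by unfold exc; omega
    omega
  rcases hc with rfl | rfl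
  · have hcut : 0 < cutCount V1 G := by have := h.cut; omega
    obtain ⟨u, hu, p, hp, hup⟩ := exists_cut_edge hcut
    have hin := h.inner2_snd hH
    obtain ⟨a, ha, b, hb, hne, hab⟩ := exists_nonedge_of_inner2_lt
      (show inner2 V1ᶜ G < inner2 V1ᶜ H by linarith)
    simp only [Finset.mem_compl] at ha hb
    rcases exists_pivot_down hu hp hup ha hb hne hab with
      ⟨v, hv, x, hx, y, hy, hvy, hvx, hnvy⟩ | hbad
    · exact fin ⟨hvx.symm, hvy, hnvy⟩ hx hy (by simp [hv])
    · refine absurd hbad (near V1ᶜ (by simpa using h.sum_abs_snd) ?_ a (by simpa using ha) p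
        (by simpa using hp))
      intro u hu v hv
      simp only [Finset.mem_compl] at hu hv
      exact hd u v (by tauto)
  · have hin := h.inner2_fst hH
    have hnn := inner2_nonneg V1 H
    obtain ⟨p, hp, q, hq, hpq⟩ := exists_edge_of_inner2_pos (show 0 < inner2 V1 G by linarith)
    have hcut : cutCount V1 G < V1.card * V1ᶜ.card := by have := h.cut; omega
    obtain ⟨a, ha, y, hy, hay⟩ := exists_cut_nonedge hcut
    rcases exists_pivot_up hp hq hpq ha hy hay with ⟨v, hv, x, hx, y, hy, hvx, hnvy⟩ | hbad
    · exact fin ⟨hvx.symm, by rintro rfl; exact hy hv, hnvy⟩ hx hy (by simp [hv])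
    · refine absurd hbad.1 (near V1 (by simpa using h.sum_abs_fst) ?_ a ha p hp)
      intro u hu v hv
      exact hd u v (by tauto)

lemma reach_one {n : ℕ} {V1 : Finset (Fin n)} {γ : ℕ} {d : Fin n → ℕ}
    (hd : ClassConst V1 d) (hγ : γ < V1.card * V1ᶜ.card)
    {H : SimpleGraph (Fin n)} (hH : memPAM V1 γ d H) {c : ℤ} (hc : c = 1 ∨ c = -1)
    {G : SimpleGraph (Fin n)} (h : St V1 γ d 1 c 4 G) : Reach V1 γ d 4 G := by
  rcases descend_or_bound hd h with ⟨G', hf, hG'⟩ | h0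
  · exact (reach_one_aux hd hγ hH hc (hG'.cast rfl rfl (by norm_num))).cons
      (h.mem le_rfl (by rcases hc with rfl | rfl <;> simp)) hf
  · exact (reach_one_aux hd hγ hH hc (h0.cast rfl rfl (by norm_num))).mono (by norm_num)

lemma reach_two {n : ℕ} {V1 : Finset (Fin n)} {γ : ℕ} {d : Fin n → ℕ}
    (hd : ClassConst V1 d) (hγ : γ < V1.card * V1ᶜ.card)
    {H : SimpleGraph (Fin n)} (hH : memPAM V1 γ d H)
    {G : SimpleGraph (Fin n)} (h : St V1 γ d 2 0 4 G) : Reach V1 γ d 6 G := by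
  have habs : ∑ v ∈ V1, |exc d G v| ≤ 2 := by simpa using h.sum_abs_fst
  have hs := h.s1
  have hnonneg : ∀ v ∈ V1, 0 ≤ exc d G v := by
    intro v hv
    by_contra! hneg
    have h1 : ∑ v ∈ V1, exc d G v < ∑ v ∈ V1, |exc d G v| :=
      Finset.sum_lt_sum (fun _ _ => le_abs_self _) ⟨v, hv, by rw [abs_of_neg hneg]; omega⟩
    omega
  -- Moving one edge from `V₁` to the cut along `x v → v y`, when `x` has positive excess.
  have step : ∀ {G : SimpleGraph (Fin n)} {v x y : Fin n}, St V1 γ d 2 0 4 G → v ∈ V1 → x ∈ V1 →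
      y ∉ V1 → G.Adj v x → ¬ G.Adj v y → 0 < exc d G x → Reach V1 γ d 5 G := by
    intro G v x y h hv hx hy hvx hvy hpos
    have hf : CanFlip G x v y := ⟨hvx.symm, by rintro rfl; exact hy hv, hvy⟩
    refine (reach_one hd hγ hH (Or.inl rfl) ((h.flip hf).cast ?_ ?_ ?_)).cons
      (h.mem le_rfl (by simp)) hf.hinge
    · simp [hx, hy]
    · simp [hx, hy, hv]
    · have h2 := abs_add_le (exc d G y) 1
      rw [abs_one] at h2
      rw [abs_of_pos hpos, abs_of_nonneg (by omega : 0 ≤ exc d G x - 1)]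
      omega
  have hin := h.inner2_fst hH
  have hnn := inner2_nonneg V1 H
  obtain ⟨p, hp, q, hq, hpq⟩ := exists_edge_of_inner2_pos (show 0 < inner2 V1 G by linarith)
  have hcut : cutCount V1 G < V1.card * V1ᶜ.card := by have := h.cut; omega
  obtain ⟨a, ha, y, hy, hay⟩ := exists_cut_nonedge hcut
  rcases exists_pivot_up hp hq hpq ha hy hay with ⟨v, hv, x, hx, y, hy, hvx, hnvy⟩ | hbad
  · by_cases hpos : 0 < exc d G x
    · exact (step h hv hx hy hvx hnvy hpos).mono (by norm_num)
    · -- First bring a unit of excess from some `u ∈ V₁` to `x`.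
      obtain ⟨u, hu, hupos⟩ : ∃ u ∈ V1, 0 < exc d G u :=
        Finset.exists_lt_of_sum_lt (f := fun _ => (0 : ℤ)) (by simp [hs])
      have hux : u ≠ x := by rintro rfl; exact hpos hupos
      have hx0 : exc d G x = 0 := le_antisymm (not_lt.1 hpos) (hnonneg x hx)
      obtain ⟨j, hj⟩ := exists_pivot_of_exc hd (G := G) (i := u) (k := x) (by tauto) (by omega)
      have hxv : x ≠ v := hvx.ne'
      have hyx : y ≠ x := by rintro rfl; exact hy hx
      have h' : St V1 γ d 2 0 4 (flipG G u j x) := by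
        refine (h.flip hj).cast ?_ ?_ ?_
        · simp [hu, hx]
        · simp [hu, hx]
        · rw [abs_of_pos hupos, abs_of_nonneg (by omega : 0 ≤ exc d G u - 1), hx0]
          simp
      refine (step (v := v) (x := x) (y := y) h' hv hx hy ?_ ?_ ?_).cons (h.mem le_rfl (by simp))
        hj.hinge
      · rw [flipG_adj]
        have := hj.2.1
        refine Or.inl ⟨hvx, ?_⟩
        rw [Ne, Sym2.eq_iff]
        rintro (⟨-, rfl⟩ | ⟨-, rfl⟩)
        · exact this rfl
        · exact hux rfl
      · rw [flipG_adj]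
        rintro (⟨h1, -⟩ | ⟨h1, -⟩)
        · exact hnvy h1
        · rw [Sym2.eq_iff] at h1
          rcases h1 with ⟨-, h1⟩ | ⟨h1, -⟩
          · exact hyx h1
          · exact hxv h1.symm
      · rw [exc_flip d hj, hx0]
        simp [hux.symm]
  · -- Two vertices of excess at least `2` would exceed the total `2` available in `V₁`.
    exfalso
    have h1 := abs_add_abs_le_sum V1 (exc d G) hp hq hpq.ne
    have h2 := hd a p (by tauto)
    have h3 := hd a q (by tauto)
    have h4 := le_abs_self (exc d G p)
    have h5 := le_abs_self (exc d G q)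
    have h6 := hnonneg a ha
    have h7 : exc d G a + 2 ≤ exc d G p := by unfold exc; omega
    have h8 : exc d G a + 2 ≤ exc d G q := by unfold exc; omega
    omega

/-- The claim for graphs whose total excess on `V₁` is nonnegative. -/
lemma reach_of_nonneg {n : ℕ} {V1 : Finset (Fin n)} {γ : ℕ} {d : Fin n → ℕ}
    (hd : ClassConst V1 d) (hγ : γ < V1.card * V1ᶜ.card)
    {H : SimpleGraph (Fin n)} (hH : memPAM V1 γ d H)
    {σ c : ℤ} {G : SimpleGraph (Fin n)} (h : St V1 γ d σ c 4 G) (hσ : 0 ≤ σ) (hc : |c| ≤ 1) :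
    Reach V1 γ d 6 G := by
  have h1 := h.sum_abs_fst
  have h2 := Finset.abs_sum_le_sum_abs (exc d G) V1
  rw [h.s1, abs_of_nonneg hσ] at h2
  rw [abs_of_nonneg hσ] at h1
  have hin := h.inner2_fst hH
  have e1 := inner2_even V1 G
  have e2 := inner2_even V1 H
  rw [abs_le] at hc
  have hcases : (σ = 0 ∧ c = 0) ∨ (σ = 1 ∧ (c = 1 ∨ c = -1)) ∨ (σ = 2 ∧ c = 0) := by omega
  rcases hcases with ⟨rfl, rfl⟩ | ⟨rfl, hc⟩ | ⟨rfl, rfl⟩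
  · exact (reach_zero hd 2 le_rfl (h.cast rfl rfl (by norm_num))).mono (by norm_num)
  · exact (reach_one hd hγ hH hc h).mono (by norm_num)
  · exact reach_two hd hγ hH h

/-- Theorem D.2. For a JDM instance with two regular classes
(`d ≡ β₁` on `V₁` and `d ≡ β₂` on `V₂ = V₁ᶜ`), every `G ∈ 𝒢'(γ,d)` can be
transformed into an element of `𝒢(γ,d)` by at most `6` hinge flips, all
intermediate graphs staying in `𝒢'(γ,d)`; i.e. this family is strongly stable
with constant `k = 6` for the hinge-flip chain. -/
theorem stmt13 {n : ℕ} (V1 : Finset (Fin n)) (β1 β2 γ : ℕ) (d : Fin n → ℕ)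
    (hV1 : V1.Nonempty) (hV2 : V1ᶜ.Nonempty)
    (hd : ∀ v, d v = if v ∈ V1 then β1 else β2)
    (hβ1lo : 1 ≤ β1) (hβ1hi : β1 ≤ n - 1)
    (hβ2lo : 1 ≤ β2) (hβ2hi : β2 ≤ n - 1)
    (hγlo : 1 ≤ γ) (hγhi : γ ≤ V1.card * V1ᶜ.card - 1)
    (hgraphical : ∃ H : SimpleGraph (Fin n), memPAM V1 γ d H) :
    ∀ G : SimpleGraph (Fin n), memPAM' V1 γ d G →
      ∃ t ≤ 6, ∃ f : ℕ → SimpleGraph (Fin n), f 0 = G ∧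
        (∀ i ≤ t, memPAM' V1 γ d (f i)) ∧
        (∀ i < t, hingeFlip (f i) (f (i+1))) ∧
        memPAM V1 γ d (f t) := by
  intro G hG
  obtain ⟨H, hH⟩ := hgraphical
  have hγ : γ < V1.card * V1ᶜ.card := by
    have := Nat.mul_pos hV1.card_pos hV2.card_pos
    omega
  have hconst : ClassConst V1 d := by
    intro u v huv
    simp only [hd, huv]
  obtain ⟨g1, g2, g3⟩ := hG
  have hsum : ∑ v ∈ V1, exc d G v + ∑ v ∈ V1ᶜ, exc d G v = 0 := by
    rw [Finset.sum_add_sum_compl]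
    simp only [exc, Finset.sum_sub_distrib]
    have : (∑ v, (deg G v : ℤ)) = ∑ v, (d v : ℤ) := by exact_mod_cast g1
    linarith
  have hL : ∑ v, |exc d G v| ≤ 4 := by
    refine le_trans (le_of_eq ?_) g2
    exact Finset.sum_congr rfl fun v _ => by rw [exc, abs_sub_comm]
  change Reach V1 γ d 6 G
  rcases le_total 0 (∑ v ∈ V1, exc d G v) with hs | hs
  · exact reach_of_nonneg (c := (cutCount V1 G : ℤ) - γ) hconst hγ hH
      ⟨rfl, by linarith, hL, by ring⟩ hs g3
  · rw [← reach_compl]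
    refine reach_of_nonneg (σ := ∑ v ∈ V1ᶜ, exc d G v) (c := (cutCount V1 G : ℤ) - γ) ?_ ?_
      (memPAM_compl.2 hH) ⟨rfl, ?_, hL, ?_⟩ (by linarith) g3
    · intro u v huv
      simp only [Finset.mem_compl] at huv
      exact hconst u v (by tauto)
    · rw [compl_compl, mul_comm]; exact hγ
    · rw [compl_compl]; linarith
    · rw [cutCount_compl]; ring
end
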